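/- Let G be an (ε,r)-uniform finite simple graph of maximum degree at most d, and let F be the subgraph of G induced on a nonempty subset of V(G). Then there exists a nonempty set L ⊆ V(F) such that |∂_F(L)| ≤ (dε/2)·|L| and |L| ≤ N^d_{2r}. -/

import Mathlib

/-!
The set `L` is found among the superlevel sets `{x ∈ S | t < f x z}`, where `f` witnesses
uniformity, `z` is a vertex and `t ∈ [0, 1]`. Such a set lies in the `r`-ball around `z`, so its
size is at most `ballBound d r ≤ ballBound d (2 * r)`; here one needs that balls in graphs of
bounded degree are uniformly bounded (`ncard_ballSet_le`), since `ballBound` is a supremum in `ℕ`.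

For the boundary, suppose every nonempty superlevel set violates the inequality. The boundary of
the superlevel set at level `t` has at most as many points as there are pairs `(x, y)` of adjacent
vertices of `S` with `f y z ≤ t < f x z`. Integrating over `t` (layer cake,
`integral_lt_indicator`) and summing over `z`, we get
`(dε/2) |S| ≤ ∑ over adjacent pairs (x, y) in S of ∑ z, (f x z - f y z)⁺`.
As `f x` and `f y` have equal mass, the inner sum is half of the `ℓ¹` distance of `f x` and `f y`,
hence less than `ε / 2`, and there are at most `d |S|` pairs; this is a contradiction.
-/


open scoped Classical symmDiff

noncomputable section

/-- The closed ball of radius `r` around `x` in the graph `G`. -/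
def ballSet {V : Type*} (G : SimpleGraph V) (r : ℕ) (x : V) : Set V :=
  {z | G.edist x z ≤ r}

lemma self_mem_ballSet {V : Type*} (G : SimpleGraph V) (r : ℕ) (x : V) :
    x ∈ ballSet G r x := by
  simp [ballSet]

/-- `G` has maximum degree at most `d`. -/
def DegLE {V : Type*} (G : SimpleGraph V) (d : ℕ) : Prop :=
  ∀ v, (G.neighborSet v).ncard ≤ d

/-- `N^d_r`: the maximum number of vertices of a ball of radius `r`
in a graph of maximum degree at most `d`. -/
def ballBound (d r : ℕ) : ℕ :=
  sSup {n | ∃ (W : Type) (_ : Fintype W) (G : SimpleGraph W) (x : W),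
    DegLE G d ∧ n = (ballSet G r x).ncard}

/-- A `Q`-verifier: a predicate on rooted `Q`-labelled finite graphs. -/
def Verifier (Q : Type) : Type 1 :=
  ∀ (B : Type) [Fintype B], SimpleGraph B → B → (B → Q) → Prop

/-- Invariance of a verifier under root- and label-preserving isomorphisms. -/
def Verifier.Inv {Q : Type} (𝒱 : Verifier Q) : Prop :=
  ∀ (B B' : Type) [Fintype B] [Fintype B'] (G : SimpleGraph B) (G' : SimpleGraph B')
    (φ : G ≃g G') (b : B) (ℓ' : B' → Q),
    𝒱 B G b (ℓ' ∘ φ) ↔ 𝒱 B' G' (φ b) ℓ'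

/-- The verifier `𝒱` of local horizon `r` accepts the proof `T` on `G`:
for every vertex `x`, the `r`-neighbourhood of `x`, rooted at `x` and labelled by
(the restriction of) `T`, satisfies `𝒱`. -/
def Accepts {Q V : Type} [Fintype V] (𝒱 : Verifier Q) (r : ℕ)
    (G : SimpleGraph V) (T : V → Q) : Prop :=
  ∀ x : V, 𝒱 ↥(ballSet G r x) (G.induce (ballSet G r x))
    ⟨x, self_mem_ballSet G r x⟩ (fun z => T z.1)

/-- `G` is `(ε,K)`-hyperfinite. -/
def IsHyperfinite {V : Type*} [Fintype V] (G : SimpleGraph V) (ε : ℝ) (K : ℕ) : Prop :=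
  ∃ W ⊆ G.edgeSet, (W.ncard : ℝ) ≤ ε * (Nat.card V : ℝ) ∧
    ∀ v : V, (((G.deleteEdges W).connectedComponentMk v).supp).ncard ≤ K

/-- `G` is `(ε,r)`-uniform. -/
def IsUniform {V : Type*} [Fintype V] (G : SimpleGraph V) (ε : ℝ) (r : ℕ) : Prop :=
  ∃ f : V → V → ℝ,
    (∀ x z, 0 ≤ f x z) ∧
    (∀ x, ∑ z, f x z = 1) ∧
    (∀ x y, G.Adj x y → ∑ z, |f x z - f y z| < ε) ∧
    (∀ x z, (r : ℕ∞) < G.edist x z → f x z = 0)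

/-- A class of finite simple graphs. -/
def GraphClass : Type 1 := ∀ (V : Type) [Fintype V], SimpleGraph V → Prop

/-- `P` is monotone: closed under taking subgraphs. -/
def GraphClass.Mono (P : GraphClass) : Prop :=
  ∀ (V W : Type) [Fintype V] [Fintype W] (G : SimpleGraph V) (H : SimpleGraph W)
    (f : W ↪ V), (∀ a b, H.Adj a b → G.Adj (f a) (f b)) → P V G → P W H

/-- `P` is closed under taking disjoint unions. -/
def GraphClass.ClosedUnderDisjUnion (P : GraphClass) : Prop :=
  ∀ (V W : Type) [Fintype V] [Fintype W] (G : SimpleGraph V) (H : SimpleGraph W),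
    P V G → P W H → P (V ⊕ W) (G ⊕g H)

/-- `P` is hyperfinite. -/
def GraphClass.Hyperfinite (P : GraphClass) : Prop :=
  ∀ ε : ℝ, 0 < ε → ∃ K : ℕ, 1 ≤ K ∧
    ∀ (V : Type) [Fintype V] (G : SimpleGraph V), P V G → IsHyperfinite G ε K

/-- The inner vertex boundary of `L` inside the subgraph of `G` induced on `S`:
vertices of `L` having a neighbour in `S \ L`. -/
def innerBoundary {V : Type*} (G : SimpleGraph V) (S L : Set V) : Set V :=
  {x ∈ L | ∃ y ∈ S \ L, G.Adj x y}

/-- The edge boundary of `L` in `F`: edges of `F` with exactly one endpoint in `L`. -/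
def edgeBoundary {V : Type*} (F : SimpleGraph V) (L : Set V) : Set (Sym2 V) :=
  {e ∈ F.edgeSet | ∃ x ∈ L, ∃ y ∉ L, e = s(x, y)}

/-- `Y` is a `K`-separator of `G`. -/
def IsSeparator {V : Type*} (G : SimpleGraph V) (K : ℕ) (Y : Set V) : Prop :=
  ∀ v : ↥(Yᶜ), ((((G.induce Yᶜ)).connectedComponentMk v).supp).ncard ≤ K



/-! ### Balls in graphs of bounded degree -/

lemma ncard_ballSet_le {W : Type*} [Fintype W] (G : SimpleGraph W) {d : ℕ} (hG : DegLE G d)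
    (n : ℕ) (x : W) : (ballSet G n x).ncard ≤ (d + 1) ^ n := by
  induction n generalizing x with
  | zero =>
    have : ballSet G 0 x = {x} := by
      ext z
      simp [ballSet, eq_comm (a := z)]
    simp [this]
  | succ n ih =>
    have hsub : ballSet G (n + 1) x ⊆
        {x} ∪ ⋃ y ∈ (G.neighborSet x).toFinset, ballSet G n y := by
      intro z hz
      have hz' : G.edist x z ≤ ((n + 1 : ℕ) : ℕ∞) := hz
      have hne : G.edist x z ≠ ⊤ := ne_top_of_le_ne_top (ENat.natCast_ne_top _) hz'
      obtain ⟨p, hp⟩ := SimpleGraph.exists_walk_of_edist_ne_top hne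
      rw [← hp] at hz'
      cases p with
      | nil => simp
      | @cons _ y _ h q =>
        right
        have hq : q.length ≤ n := by
          have := ENat.natCast_le_natCast.mp hz'
          simpa using this
        simp only [Set.mem_iUnion]
        refine ⟨y, by simpa using h, ?_⟩
        exact (SimpleGraph.edist_le q).trans (by exact_mod_cast hq)
    have hcard : (G.neighborSet x).toFinset.card ≤ d := by
      rw [← Set.ncard_eq_toFinset_card']
      exact hG x
    have hU : (⋃ y ∈ (G.neighborSet x).toFinset, ballSet G n y).ncard ≤ d * (d + 1) ^ n := by
      calc _ ≤ ∑ y ∈ (G.neighborSet x).toFinset, (ballSet G n y).ncard :=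
            Finset.set_ncard_biUnion_le _ _
        _ ≤ ∑ y ∈ (G.neighborSet x).toFinset, (d + 1) ^ n := Finset.sum_le_sum fun y _ => ih y
        _ ≤ d * (d + 1) ^ n := by
          rw [Finset.sum_const, smul_eq_mul]
          exact Nat.mul_le_mul_right _ hcard
    have h1 : 1 ≤ (d + 1) ^ n := Nat.one_le_pow _ _ (by omega)
    calc (ballSet G (n + 1) x).ncard
        ≤ _ := Set.ncard_le_ncard hsub (Set.toFinite _)
      _ ≤ _ := Set.ncard_union_le _ _
      _ ≤ 1 + d * (d + 1) ^ n := by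
        rw [Set.ncard_singleton]
        omega
      _ ≤ (d + 1) ^ (n + 1) := by
        rw [pow_succ]
        linarith

/-- The supremum defining `ballBound` is taken over a bounded set, hence is not a junk value. -/
lemma ncard_ballSet_le_ballBound {W : Type} [Fintype W] (G : SimpleGraph W) {d : ℕ}
    (hG : DegLE G d) (n : ℕ) (x : W) : (ballSet G n x).ncard ≤ ballBound d n := by
  refine le_csSup ⟨(d + 1) ^ n, ?_⟩ ⟨W, inferInstance, G, x, hG, rfl⟩
  rintro _ ⟨W', _, G', x', hG', rfl⟩
  exact ncard_ballSet_le G' hG' n x'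

/-! ### The layer-cake integral -/

lemma intervalIntegrable_lt_indicator (a : ℝ) :
    IntervalIntegrable (fun t : ℝ => if t < a then (1 : ℝ) else 0) MeasureTheory.volume 0 1 := by
  refine AntitoneOn.intervalIntegrable fun s _ t _ hst => ?_
  split_ifs <;> linarith

lemma integral_lt_indicator {a : ℝ} (h0 : 0 ≤ a) (h1 : a ≤ 1) :
    ∫ t in (0 : ℝ)..1, (if t < a then (1 : ℝ) else 0) = a := by
  have h : (fun t : ℝ => if t < a then (1 : ℝ) else 0) = (Set.Iio a).indicator 1 := by
    ext t
    simp [Set.indicator_apply]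
  have hset : Set.Iio a ∩ Set.Ioc 0 1 = Set.Ioo 0 a := by
    ext t
    simp only [Set.mem_inter_iff, Set.mem_Iio, Set.mem_Ioc, Set.mem_Ioo]
    exact ⟨fun h => ⟨h.2.1, h.1⟩, fun h => ⟨h.2, h.1, by linarith [h.2]⟩⟩
  rw [intervalIntegral.integral_of_le zero_le_one, h,
    MeasureTheory.integral_indicator_one measurableSet_Iio,
    MeasureTheory.measureReal_restrict_apply measurableSet_Iio, hset]
  simp [MeasureTheory.measureReal_def, h0]

/-! ### The averaging argument -/

/-- Every induced subgraph of an `(ε,r)`-uniform graph contains a small set with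
small inner vertex boundary. -/
theorem small_boundary_set (ε : ℝ) (hε : 0 < ε) (d r : ℕ) (hd : 1 ≤ d) (hr : 1 ≤ r)
    (V : Type) [Fintype V] (G : SimpleGraph V) (hG : DegLE G d)
    (hunif : IsUniform G ε r) (S : Set V) (hS : S.Nonempty) :
    ∃ L : Set V, L ⊆ S ∧ L.Nonempty ∧
      ((innerBoundary G S L).ncard : ℝ) ≤ (d : ℝ) * ε / 2 * (L.ncard : ℝ) ∧
      L.ncard ≤ ballBound d (2 * r) := by
  obtain ⟨f, hf0, hf1, hfε, hfr⟩ := hunif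
  by_contra hcon
  set c : ℝ := (d : ℝ) * ε / 2 with hc
  have hle1 : ∀ x z, f x z ≤ 1 := fun x z => by
    rw [← hf1 x]
    exact Finset.single_le_sum (fun z _ => hf0 x z) (Finset.mem_univ z)
  let T : Finset V := S.toFinset
  let N : V → Finset V := fun x => T.filter (fun y => G.Adj x y)
  let φ : ℝ → ℝ → ℝ := fun a t => if t < a then 1 else 0
  have hφ : ∀ a, IntervalIntegrable (φ a) MeasureTheory.volume 0 1 :=
    intervalIntegrable_lt_indicator
  have hNcard : ∀ x, (N x).card ≤ d := fun x => by
    rw [← Set.ncard_coe_finset]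
    refine (Set.ncard_le_ncard ?_ (Set.toFinite _)).trans (hG x)
    intro y hy
    simpa using (Finset.mem_filter.mp (Finset.mem_coe.mp hy)).2
  -- The pointwise inequality to be integrated: an edge crosses the level `t` downwards exactly
  -- when `φ (f x z) t - φ (min (f x z) (f y z)) t = 1`.
  have hlevel : ∀ z, ∀ t ∈ Set.Icc (0 : ℝ) 1, c * ∑ x ∈ T, φ (f x z) t ≤
      ∑ x ∈ T, ∑ y ∈ N x, (φ (f x z) t - φ (min (f x z) (f y z)) t) := by
    intro z t ht
    have hterm : ∀ x y, 0 ≤ φ (f x z) t - φ (min (f x z) (f y z)) t := by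
      intro x y
      simp only [φ, lt_min_iff]
      split_ifs <;> first | (exfalso; tauto) | norm_num
    let L : Finset V := T.filter (fun x => t < f x z)
    have hLS : (L : Set V) ⊆ S := fun x hx => by
      simpa [T] using (Finset.mem_filter.mp (Finset.mem_coe.mp hx)).1
    have hLsum : ∑ x ∈ T, φ (f x z) t = (L.card : ℝ) := by
      simp [φ, L]
    have hLball : (L : Set V).ncard ≤ ballBound d (2 * r) := by
      refine (Set.ncard_le_ncard ?_ (Set.toFinite _)).trans
        (ncard_ballSet_le_ballBound G hG (2 * r) z)
      intro x hx
      have hx' : t < f x z := (Finset.mem_filter.mp (Finset.mem_coe.mp hx)).2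
      have hxz : G.edist x z ≤ r := by
        by_contra h
        have := hfr x z (not_le.mp h)
        linarith [ht.1]
      rw [SimpleGraph.edist_comm] at hxz
      exact hxz.trans (by exact_mod_cast (by omega : r ≤ 2 * r))
    have hbd : ((innerBoundary G S (L : Set V)).ncard : ℝ) ≤
        ∑ x ∈ T, ∑ y ∈ N x, (φ (f x z) t - φ (min (f x z) (f y z)) t) := by
      let B : Finset V := (innerBoundary G S (L : Set V)).toFinset
      have hBT : B ⊆ T := fun x hx => by
        have hx' : x ∈ innerBoundary G S (L : Set V) := by simpa [B] using hx
        simpa [T] using hLS hx'.1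
      calc ((innerBoundary G S (L : Set V)).ncard : ℝ) = ∑ x ∈ B, (1 : ℝ) := by
            rw [Set.ncard_eq_toFinset_card']
            simp [B]
        _ ≤ ∑ x ∈ B, ∑ y ∈ N x, (φ (f x z) t - φ (min (f x z) (f y z)) t) := by
            refine Finset.sum_le_sum fun x hx => ?_
            have hx' : x ∈ innerBoundary G S (L : Set V) := by simpa [B] using hx
            obtain ⟨hxL, y, ⟨hyS, hyL⟩, hxy⟩ := hx'
            have hxt : t < f x z := (Finset.mem_filter.mp (Finset.mem_coe.mp hxL)).2
            have hyT : y ∈ T := by simpa [T] using hyS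
            have hyt : ¬ t < f y z := fun h =>
              hyL (Finset.mem_coe.mpr (Finset.mem_filter.mpr ⟨hyT, h⟩))
            have hyN : y ∈ N x := Finset.mem_filter.mpr ⟨hyT, hxy⟩
            have h1 : φ (f x z) t - φ (min (f x z) (f y z)) t = 1 := by
              simp [φ, hxt, hyt]
            rw [← h1]
            exact Finset.single_le_sum
              (f := fun y => φ (f x z) t - φ (min (f x z) (f y z)) t)
              (fun y _ => hterm x y) hyN
        _ ≤ _ := Finset.sum_le_sum_of_subset_of_nonneg hBT
            fun x _ _ => Finset.sum_nonneg fun y _ => hterm x y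
    rcases L.eq_empty_or_nonempty with hL | hL
    · rw [hLsum, hL]
      simpa using Finset.sum_nonneg fun x (_ : x ∈ T) =>
        Finset.sum_nonneg fun y (_ : y ∈ N x) => hterm x y
    · rw [hLsum]
      refine le_trans (le_of_not_ge fun h => hcon ⟨L, hLS, by simpa using hL, ?_, hLball⟩) hbd
      rwa [Set.ncard_coe_finset]
  have hint : ∀ z, c * ∑ x ∈ T, f x z ≤
      ∑ x ∈ T, ∑ y ∈ N x, (f x z - min (f x z) (f y z)) := by
    intro z
    have hI : ∀ x, ∫ t in (0 : ℝ)..1, φ (f x z) t = f x z := fun x =>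
      integral_lt_indicator (hf0 x z) (hle1 x z)
    have hI' : ∀ x y, ∫ t in (0 : ℝ)..1, φ (min (f x z) (f y z)) t = min (f x z) (f y z) :=
      fun x y => integral_lt_indicator (le_min (hf0 x z) (hf0 y z))
        ((min_le_left _ _).trans (hle1 x z))
    have hi1 : IntervalIntegrable (fun t => ∑ x ∈ T, φ (f x z) t) MeasureTheory.volume 0 1 := by
      simpa only [Finset.sum_fn] using
        IntervalIntegrable.sum T (f := fun x => φ (f x z)) fun x _ => hφ _
    have hi2 : ∀ x, IntervalIntegrable
        (fun t => ∑ y ∈ N x, (φ (f x z) t - φ (min (f x z) (f y z)) t))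
        MeasureTheory.volume 0 1 := fun x => by
      simpa only [Finset.sum_fn] using
        IntervalIntegrable.sum (N x)
          (f := fun y t => φ (f x z) t - φ (min (f x z) (f y z)) t)
          fun y _ => (hφ _).sub (hφ _)
    have hi3 : IntervalIntegrable
        (fun t => ∑ x ∈ T, ∑ y ∈ N x, (φ (f x z) t - φ (min (f x z) (f y z)) t))
        MeasureTheory.volume 0 1 := by
      simpa only [Finset.sum_fn] using
        IntervalIntegrable.sum T
          (f := fun x t => ∑ y ∈ N x, (φ (f x z) t - φ (min (f x z) (f y z)) t))
          fun x _ => hi2 x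
    have key := intervalIntegral.integral_mono_on zero_le_one (hi1.const_mul c) hi3 (hlevel z)
    rw [intervalIntegral.integral_const_mul,
      intervalIntegral.integral_finsetSum (fun x _ => hφ _),
      intervalIntegral.integral_finsetSum (fun x _ => hi2 x)] at key
    simp only [hI] at key
    refine key.trans (le_of_eq (Finset.sum_congr rfl fun x _ => ?_))
    rw [intervalIntegral.integral_finsetSum (fun y _ => (hφ _).sub (hφ _))]
    refine Finset.sum_congr rfl fun y _ => ?_
    rw [intervalIntegral.integral_sub (hφ _) (hφ _), hI, hI']
  -- Both `f x` and `f y` have mass one, so the positive part carries half of the `ℓ¹` distance.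
  have hpair : ∀ x y, G.Adj x y → ∑ z, (f x z - min (f x z) (f y z)) < ε / 2 := by
    intro x y hxy
    have h : ∀ z, f x z - min (f x z) (f y z) = (f x z - f y z + |f x z - f y z|) / 2 := by
      intro z
      rcases le_total (f x z) (f y z) with h | h
      · rw [min_eq_left h, abs_of_nonpos (by linarith)]
        ring
      · rw [min_eq_right h, abs_of_nonneg (by linarith)]
        ring
    simp only [h]
    rw [← Finset.sum_div, Finset.sum_add_distrib, Finset.sum_sub_distrib, hf1, hf1]
    linarith [hfε x y hxy]
  have hvertex : ∀ x, ∑ y ∈ N x, ∑ z, (f x z - min (f x z) (f y z)) < c := by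
    intro x
    rcases (N x).eq_empty_or_nonempty with h | h
    · rw [h, Finset.sum_empty]
      have : (0 : ℝ) < d := by exact_mod_cast hd
      positivity
    · calc _ < ∑ y ∈ N x, ε / 2 :=
            Finset.sum_lt_sum_of_nonempty h fun y hy => hpair x y (Finset.mem_filter.mp hy).2
        _ = (N x).card * (ε / 2) := by simp
        _ ≤ d * (ε / 2) := by
            have : ((N x).card : ℝ) ≤ d := by exact_mod_cast hNcard x
            gcongr
        _ = c := by rw [hc]; ring
  have hTne : T.Nonempty := by simpa [T] using hS
  have hupper : ∑ x ∈ T, ∑ y ∈ N x, ∑ z, (f x z - min (f x z) (f y z)) < ∑ x ∈ T, c :=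
    Finset.sum_lt_sum_of_nonempty hTne fun x _ => hvertex x
  have hlower : ∑ x ∈ T, c ≤ ∑ x ∈ T, ∑ y ∈ N x, ∑ z, (f x z - min (f x z) (f y z)) := by
    have h := Finset.sum_le_sum fun z (_ : z ∈ Finset.univ) => hint z
    rw [← Finset.mul_sum, Finset.sum_comm, Finset.sum_comm (s := Finset.univ)] at h
    simp only [hf1] at h
    calc ∑ x ∈ T, c = c * ∑ x ∈ T, (1 : ℝ) := by simp [mul_comm]
      _ ≤ _ := h
      _ = _ := Finset.sum_congr rfl fun x _ => Finset.sum_comm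
  exact absurd hupper (not_lt.mpr hlower)

end
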